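/- Enriched Dubuc Theorem: Let (L ⊣ U, η, ε): 𝔅 → ℭ and (E ⊣ R, ρ, μ): 𝔄 → ℭ be V-adjunctions and J: 𝔄 → 𝔅 a V-functor with L∘J = E, and assume L is V-precomonadic. Then J has a right V-adjoint G if and only if for each object Y of 𝔅 the V-equalizer of the pair RL(U(μ_{LY})η_{JRLY})ρ_{RLY}, RL(η_Y): RLY ⇉ RLULY exists in 𝔄; in that case these V-equalizers give the values of the right V-adjoint G. -/

import Mathlib

/-! Enriched adjoint triangles (Section 1 of "On Biadjoint Triangles", Lucatelli Nunes). -/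

open CategoryTheory MonoidalCategory Limits

universe v u u₁ u₂ u₃

namespace EnrichedAdjointTriangles

variable (V : Type u) [Category.{v} V] [MonoidalCategory V] [SymmetricCategory V]
  [MonoidalClosed V] [HasLimits V] [HasColimits V]

section Defs
variable {C : Type u₁} [EnrichedCategory V C]

/-- A generalized element of the `V`-object of morphisms, i.e. a morphism of the
underlying category. -/
abbrev EHom (a b : C) : Type v := (𝟙_ V) ⟶ (a ⟶[V] b)

/-- Composition of generalized elements. -/
def vcomp {a b c : C} (f : EHom V a b) (g : EHom V b c) : EHom V a c :=
  (λ_ (𝟙_ V)).inv ≫ (f ⊗ₘ g) ≫ eComp V a b c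

/-- Post-composition with a generalized element, as a morphism of `V`. -/
def postcompV (W : C) {a b : C} (e : EHom V a b) : ((W ⟶[V] a) : V) ⟶ (W ⟶[V] b) :=
  (ρ_ _).inv ≫ (𝟙 _ ⊗ₘ e) ≫ eComp V W a b

/-- Pre-composition with a generalized element, as a morphism of `V`. -/
def precompV {a b : C} (e : EHom V a b) (c : C) : ((b ⟶[V] c) : V) ⟶ (a ⟶[V] c) :=
  (λ_ _).inv ≫ (e ⊗ₘ 𝟙 _) ≫ eComp V a b c

/-- `(e, i)` is a conical `V`-equalizer of the pair of morphisms `q, r : a ⟶ b`: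
each `V`-valued hom-functor takes it to an equalizer diagram in `V`. -/
structure IsVEqualizer {a b : C} (q r : EHom V a b) (e : C) (i : EHom V e a) : Prop where
  w : ∀ W : C, postcompV V W i ≫ postcompV V W q = postcompV V W i ≫ postcompV V W r
  isLimit : ∀ W : C, Nonempty (IsLimit (Fork.ofι (postcompV V W i) (w W)))

/-- The conical `V`-equalizer of `q` and `r` exists. -/
def HasVEqualizer {a b : C} (q r : EHom V a b) : Prop :=
  ∃ (e : C) (i : EHom V e a), IsVEqualizer V q r e i

end Defs

section Nat
variable {B : Type u₁} [EnrichedCategory V B] {C : Type u₂} [EnrichedCategory V C]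

/-- A `V`-natural transformation between `V`-functors. -/
structure VNat (F G : EnrichedFunctor V B C) where
  app : ∀ X : B, EHom V (F.obj X) (G.obj X)
  naturality :
    ∀ X Y : B,
      (ρ_ _).inv ≫ (F.map X Y ⊗ₘ app Y) ≫ eComp V (F.obj X) (F.obj Y) (G.obj Y) =
        (λ_ _).inv ≫ (app X ⊗ₘ G.map X Y) ≫ eComp V (F.obj X) (G.obj X) (G.obj Y)

/-- A `V`-adjunction `(L ⊣ U, η, ε)`, given by unit and counit `V`-natural
transformations satisfying the triangle identities. -/
structure VAdjunction (L : EnrichedFunctor V B C) (U : EnrichedFunctor V C B) where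
  η : VNat V (EnrichedFunctor.id V B) (EnrichedFunctor.comp V L U)
  ε : VNat V (EnrichedFunctor.comp V U L) (EnrichedFunctor.id V C)
  left_triangle :
    ∀ X : B,
      vcomp V (η.app X ≫ L.map X (U.obj (L.obj X))) (ε.app (L.obj X)) = eId V (L.obj X)
  right_triangle :
    ∀ Y : C,
      vcomp V (η.app (U.obj Y)) (ε.app Y ≫ U.map (L.obj (U.obj Y)) Y) = eId V (U.obj Y)

end Nat

section Triangle

variable {A : Type u₁} [EnrichedCategory V A] {B : Type u₂} [EnrichedCategory V B]
  {C : Type u₃} [EnrichedCategory V C]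
  (J : EnrichedFunctor V A B) (L : EnrichedFunctor V B C) (R : EnrichedFunctor V C A)
  (U : EnrichedFunctor V C B)
  (adj1 : VAdjunction V (EnrichedFunctor.comp V J L) R) (adj2 : VAdjunction V L U)

/-- The generalized element `L(η_Y) : LY ⟶ LULY`. -/
def Lη (Y : B) : EHom V (L.obj Y) (L.obj (U.obj (L.obj Y))) :=
  adj2.η.app Y ≫ L.map Y (U.obj (L.obj Y))

/-- `ℭ(EA, L(η_Y))`, the first leg of the parallel pair. -/
def parallelFst (A' : A) (Y : B) :
    ((L.obj (J.obj A') ⟶[V] L.obj Y) : V) ⟶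
      (L.obj (J.obj A') ⟶[V] L.obj (U.obj (L.obj Y))) :=
  postcompV V (L.obj (J.obj A')) (Lη V L U adj2 Y)

/-- `L_{JA, ULY} ∘ χ_{(JA, LY)}`, the second leg of the parallel pair:
`f ↦ L(U(f) ∘ η_{JA})`. -/
def parallelSnd (A' : A) (Y : B) :
    ((L.obj (J.obj A') ⟶[V] L.obj Y) : V) ⟶
      (L.obj (J.obj A') ⟶[V] L.obj (U.obj (L.obj Y))) :=
  U.map (L.obj (J.obj A')) (L.obj Y) ≫
    precompV V (adj2.η.app (J.obj A')) (U.obj (L.obj Y)) ≫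
    L.map (J.obj A') (U.obj (L.obj Y))

/-- The generalized element `q_Y = RL(η_Y) : RLY ⟶ RLULY`. -/
def qY (Y : B) :
    EHom V (R.obj (L.obj Y)) (R.obj (L.obj (U.obj (L.obj Y)))) :=
  Lη V L U adj2 Y ≫ R.map (L.obj Y) (L.obj (U.obj (L.obj Y)))

/-- The generalized element `r_Y = RL(U(μ_{LY}) ∘ η_{JRLY}) ∘ ρ_{RLY} : RLY ⟶ RLULY`. -/
def rY (Y : B) :
    EHom V (R.obj (L.obj Y)) (R.obj (L.obj (U.obj (L.obj Y)))) :=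
  vcomp V (adj1.η.app (R.obj (L.obj Y)))
    (vcomp V (adj2.η.app (J.obj (R.obj (L.obj Y))))
        (adj1.ε.app (L.obj Y) ≫
          U.map (L.obj (J.obj (R.obj (L.obj Y)))) (L.obj Y)) ≫
      L.map (J.obj (R.obj (L.obj Y))) (U.obj (L.obj Y)) ≫
      R.map (L.obj (J.obj (R.obj (L.obj Y)))) (L.obj (U.obj (L.obj Y))))

/-- `L` is `V`-precomonadic: for every `Y`, the diagram
`Y → ULY ⇉ ULULY` is a conical `V`-equalizer. -/
def VPrecomonadic : Prop :=
  ∀ Y : B,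
    IsVEqualizer V (adj2.η.app (U.obj (L.obj Y)))
      (Lη V L U adj2 Y ≫ U.map (L.obj Y) (L.obj (U.obj (L.obj Y))))
      Y (adj2.η.app Y)

end Triangle

end EnrichedAdjointTriangles
namespace EnrichedAdjointTriangles

/-!
`J` has a right adjoint iff every presheaf `B(J-, Y)` is representable. Precomonadicity, probed by
the objects `JX` and transposed along `L ⊣ U`, presents `L : B(JX, Y) ⟶ C(LJX, LY)` as an
equalizer; transposing once more along `LJ ⊣ R`, the map `B(JX, Y) ⟶ A(X, RLY)` becomes an
equalizer of the maps induced by `r_Y` and `q_Y`. Hence an equalizer of `r_Y` and `q_Y` in `A` is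
the same thing as an object representing `B(J-, Y)`.
-/

variable {V : Type u} [Category.{v} V] [MonoidalCategory V]

section Composition

variable {C : Type u₁} [EnrichedCategory V C]

lemma vcomp_eq_comp_postcompV {a b c : C} (f : EHom V a b) (g : EHom V b c) :
    vcomp V f g = f ≫ postcompV V a g := by
  simp only [vcomp, postcompV, MonoidalCategory.tensorHom_def, id_whiskerRight,
    Category.id_comp, Category.assoc]
  rw [rightUnitor_inv_naturality_assoc, unitors_inv_equal]

lemma vcomp_eq_comp_precompV {a b c : C} (f : EHom V a b) (g : EHom V b c) :
    vcomp V f g = g ≫ precompV V f c := by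
  simp only [vcomp, precompV, tensorHom_def', whiskerLeft_id, Category.id_comp, Category.assoc]
  rw [leftUnitor_inv_naturality_assoc]

lemma postcompV_eId (W a : C) : postcompV V W (eId V a) = 𝟙 _ := by
  simp [postcompV]

lemma precompV_eId (a c : C) : precompV V (eId V a) c = 𝟙 _ := by
  simp [precompV]

lemma eId_comp_postcompV {a b : C} (f : EHom V a b) : eId V a ≫ postcompV V a f = f := by
  rw [← vcomp_eq_comp_postcompV, vcomp_eq_comp_precompV, precompV_eId, Category.comp_id]

lemma eId_comp_precompV {a b : C} (f : EHom V a b) : eId V b ≫ precompV V f b = f := by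
  rw [← vcomp_eq_comp_precompV, vcomp_eq_comp_postcompV, postcompV_eId, Category.comp_id]

lemma eComp_comp_postcompV (a b : C) {c d : C} (g : EHom V c d) :
    eComp V a b c ≫ postcompV V a g = (_ ◁ postcompV V b g) ≫ eComp V a b d := by
  simp only [postcompV, id_tensorHom, whiskerLeft_comp, Category.assoc]
  rw [rightUnitor_inv_naturality_assoc, ← whisker_exchange_assoc, ← e_assoc']
  simp

lemma eComp_comp_precompV {a b : C} (f : EHom V a b) (c d : C) :
    eComp V b c d ≫ precompV V f d = (precompV V f c ▷ _) ≫ eComp V a c d := by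
  simp only [precompV, tensorHom_id, comp_whiskerRight, Category.assoc]
  rw [leftUnitor_inv_naturality_assoc, whisker_exchange_assoc]
  simp [e_assoc']

lemma whiskerLeft_precompV_comp_eComp (a : C) {b c : C} (f : EHom V b c) (d : C) :
    (_ ◁ precompV V f d) ≫ eComp V a b d = (postcompV V a f ▷ _) ≫ eComp V a c d := by
  simp only [precompV, postcompV, tensorHom_id, id_tensorHom, comp_whiskerRight,
    whiskerLeft_comp, Category.assoc, ← e_assoc']
  simp

lemma precompV_comp_postcompV {a b c d : C} (f : EHom V a b) (g : EHom V c d) :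
    precompV V f c ≫ postcompV V a g = postcompV V b g ≫ precompV V f d := by
  simp only [precompV, tensorHom_id, Category.assoc]
  rw [eComp_comp_postcompV, leftUnitor_inv_naturality_assoc, whisker_exchange_assoc]

lemma postcompV_vcomp (W : C) {a b c : C} (f : EHom V a b) (g : EHom V b c) :
    postcompV V W (vcomp V f g) = postcompV V W f ≫ postcompV V W g := by
  rw [postcompV, id_tensorHom, vcomp_eq_comp_postcompV, whiskerLeft_comp_assoc,
    ← eComp_comp_postcompV]
  simp only [postcompV, id_tensorHom, Category.assoc]

lemma precompV_vcomp {a b c : C} (f : EHom V a b) (g : EHom V b c) (d : C) :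
    precompV V (vcomp V f g) d = precompV V g d ≫ precompV V f d := by
  rw [precompV, tensorHom_id, vcomp_eq_comp_precompV, comp_whiskerRight_assoc,
    ← eComp_comp_precompV]
  simp only [precompV, tensorHom_id, Category.assoc]

end Composition

section Functor

variable {B : Type u₁} [EnrichedCategory V B] {C : Type u₂} [EnrichedCategory V C]

lemma postcompV_comp_map (F : EnrichedFunctor V B C) (W : B) {a b : B} (f : EHom V a b) :
    postcompV V W f ≫ F.map W b = F.map W a ≫ postcompV V (F.obj W) (f ≫ F.map a b) := by
  simp only [postcompV, id_tensorHom, Category.assoc, F.map_comp, whiskerLeft_comp]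
  rw [rightUnitor_inv_naturality_assoc, MonoidalCategory.tensorHom_def, Category.assoc,
    whisker_exchange_assoc]

lemma precompV_comp_map (F : EnrichedFunctor V B C) {a b : B} (f : EHom V a b) (W : B) :
    precompV V f W ≫ F.map a W = F.map b W ≫ precompV V (f ≫ F.map a b) (F.obj W) := by
  simp only [precompV, tensorHom_id, Category.assoc, F.map_comp, comp_whiskerRight]
  rw [leftUnitor_inv_naturality_assoc, tensorHom_def', Category.assoc, ← whisker_exchange_assoc]

lemma vNat_naturality_iff {F G : EnrichedFunctor V B C}
    (app : ∀ X : B, EHom V (F.obj X) (G.obj X)) (X Y : B) :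
    ((ρ_ _).inv ≫ (F.map X Y ⊗ₘ app Y) ≫ eComp V (F.obj X) (F.obj Y) (G.obj Y) =
        (λ_ _).inv ≫ (app X ⊗ₘ G.map X Y) ≫ eComp V (F.obj X) (G.obj X) (G.obj Y)) ↔
      F.map X Y ≫ postcompV V _ (app Y) = G.map X Y ≫ precompV V (app X) _ := by
  simp only [precompV, postcompV, tensorHom_id, id_tensorHom]
  rw [rightUnitor_inv_naturality_assoc, leftUnitor_inv_naturality_assoc,
    MonoidalCategory.tensorHom_def, tensorHom_def', Category.assoc, Category.assoc]

/-- The `V`-morphism `A(X, g) ⟶ B(JX, Y)`, `f ↦ ε ∘ Jf`, induced by `ε : Jg ⟶ Y`. -/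
def counitHom (J : EnrichedFunctor V B C) {g : B} {Y : C} (ε : EHom V (J.obj g) Y) (X : B) :
    ((X ⟶[V] g) : V) ⟶ (J.obj X ⟶[V] Y) :=
  J.map X g ≫ postcompV V (J.obj X) ε

variable {J : EnrichedFunctor V B C} {g : B} {Y : C} (ε : EHom V (J.obj g) Y)

lemma eId_comp_counitHom : eId V g ≫ counitHom J ε g = ε := by
  rw [counitHom, J.map_id_assoc, eId_comp_postcompV]

lemma postcompV_comp_counitHom (X : B) {g' : B} (f : EHom V g' g) :
    postcompV V X f ≫ counitHom J ε X = counitHom J (f ≫ counitHom J ε g') X := by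
  rw [counitHom, reassoc_of% postcompV_comp_map, ← postcompV_vcomp, vcomp_eq_comp_postcompV,
    Category.assoc, ← counitHom, ← counitHom]

lemma precompV_comp_counitHom {X X' : B} (f : EHom V X X') :
    precompV V f g ≫ counitHom J ε X =
      counitHom J ε X' ≫ precompV V (f ≫ J.map X X') Y := by
  rw [counitHom, reassoc_of% precompV_comp_map, precompV_comp_postcompV, counitHom,
    Category.assoc]

lemma eComp_comp_counitHom (X X' : B) :
    eComp V X X' g ≫ counitHom J ε X =
      (J.map X X' ⊗ₘ counitHom J ε X') ≫ eComp V (J.obj X) (J.obj X') Y := by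
  rw [counitHom, J.map_comp_assoc, eComp_comp_postcompV, tensorHom_comp_whiskerLeft_assoc,
    ← counitHom]

end Functor

namespace VAdjunction

variable {B : Type u₁} [EnrichedCategory V B] {C : Type u₂} [EnrichedCategory V C]
  {L : EnrichedFunctor V B C} {U : EnrichedFunctor V C B} (adj : VAdjunction V L U)

/-- The components of the unit, typed without `EnrichedFunctor.id` and `EnrichedFunctor.comp`:
`rw` does not see through `(EnrichedFunctor.comp V L U).obj X`. -/
def unit (X : B) : EHom V X (U.obj (L.obj X)) := adj.η.app X

/-- The components of the counit, typed like those of `unit`. -/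
def counit (Y : C) : EHom V (L.obj (U.obj Y)) Y := adj.ε.app Y

lemma map_comp_map_comp_precompV_unit (X Y : B) :
    L.map X Y ≫ U.map (L.obj X) (L.obj Y) ≫ precompV V (adj.unit X) (U.obj (L.obj Y)) =
      postcompV V X (adj.unit Y) := by
  have h : 𝟙 _ ≫ postcompV V X (adj.unit Y) =
      (L.map X Y ≫ U.map (L.obj X) (L.obj Y)) ≫ precompV V (adj.unit X) (U.obj (L.obj Y)) :=
    (vNat_naturality_iff adj.η.app X Y).1 (adj.η.naturality X Y)
  rw [← Category.assoc, ← h, Category.id_comp]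

lemma map_comp_counitHom_counit (X Y : C) :
    U.map X Y ≫ counitHom L (adj.counit Y) (U.obj X) = precompV V (adj.counit X) Y := by
  have h : (U.map X Y ≫ L.map (U.obj X) (U.obj Y)) ≫ postcompV V _ (adj.counit Y) =
      𝟙 _ ≫ precompV V (adj.counit X) Y :=
    (vNat_naturality_iff adj.ε.app X Y).1 (adj.ε.naturality X Y)
  rw [counitHom, ← Category.assoc, h, Category.id_comp]

lemma vcomp_unit_comp_map_counit (X : B) :
    vcomp V (adj.unit X ≫ L.map X (U.obj (L.obj X))) (adj.counit (L.obj X)) = eId V (L.obj X) :=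
  adj.left_triangle X

lemma vcomp_unit_counit_comp_map (Y : C) :
    vcomp V (adj.unit (U.obj Y)) (adj.counit Y ≫ U.map (L.obj (U.obj Y)) Y) = eId V (U.obj Y) :=
  adj.right_triangle Y

/-- The isomorphism `χ : C(LX, Z) ≅ B(X, UZ)` of a `V`-adjunction `L ⊣ U`. -/
def homIso (X : B) (Z : C) : ((L.obj X ⟶[V] Z) : V) ≅ (X ⟶[V] U.obj Z) where
  hom := U.map (L.obj X) Z ≫ precompV V (adj.unit X) (U.obj Z)
  inv := counitHom L (adj.counit Z) X
  hom_inv_id := by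
    rw [Category.assoc, precompV_comp_counitHom, reassoc_of% adj.map_comp_counitHom_counit,
      ← precompV_vcomp, vcomp_unit_comp_map_counit, precompV_eId]
  inv_hom_id := by
    rw [counitHom, Category.assoc, reassoc_of% postcompV_comp_map, ← precompV_comp_postcompV,
      reassoc_of% adj.map_comp_map_comp_precompV_unit, ← postcompV_vcomp,
      vcomp_unit_counit_comp_map, postcompV_eId]

lemma map_comp_homIso_hom (X Y : B) :
    L.map X Y ≫ (adj.homIso X (L.obj Y)).hom = postcompV V X (adj.unit Y) :=
  adj.map_comp_map_comp_precompV_unit X Y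

lemma postcompV_comp_homIso_hom (X : B) {Z Z' : C} (f : EHom V Z Z') :
    postcompV V (L.obj X) f ≫ (adj.homIso X Z').hom =
      (adj.homIso X Z).hom ≫ postcompV V X (f ≫ U.map Z Z') := by
  simp only [homIso, Category.assoc]
  rw [reassoc_of% postcompV_comp_map, precompV_comp_postcompV]

lemma vcomp_unit_comp_map {X : B} {Z : C} (f : EHom V (L.obj X) Z) :
    vcomp V (adj.unit X) (f ≫ U.map (L.obj X) Z) = f ≫ (adj.homIso X Z).hom := by
  rw [vcomp_eq_comp_precompV, Category.assoc, homIso]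

lemma counitHom_comp_homIso_hom (X : B) {X' : B} {Z : C} (f : EHom V (L.obj X') Z) :
    counitHom L f X ≫ (adj.homIso X Z).hom = postcompV V X (f ≫ (adj.homIso X' Z).hom) := by
  rw [counitHom, Category.assoc, postcompV_comp_homIso_hom, reassoc_of% adj.map_comp_homIso_hom,
    ← postcompV_vcomp, vcomp_unit_comp_map]

end VAdjunction

section Universal

variable {A : Type u₁} [EnrichedCategory V A] {B : Type u₂} [EnrichedCategory V B]

/-- `ε : Jg ⟶ Y` is a `V`-universal arrow from `J` to `Y`: it exhibits `g` as a representing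
object of the `V`-presheaf `B(J-, Y)`. -/
def IsVUniversal (J : EnrichedFunctor V A B) {g : A} {Y : B} (ε : EHom V (J.obj g) Y) : Prop :=
  ∀ X : A, IsIso (counitHom J ε X)

variable {J : EnrichedFunctor V A B}

lemma VAdjunction.isVUniversal_counit {G : EnrichedFunctor V B A} (adj : VAdjunction V J G)
    (Y : B) : IsVUniversal J (adj.counit Y) :=
  fun X => (adj.homIso X Y).isIso_inv

namespace IsVUniversal

variable {g : A} {Y : B} {ε : EHom V (J.obj g) Y}

lemma hom_ext (hε : IsVUniversal J ε) {T : V} {X : A} {f f' : T ⟶ (X ⟶[V] g)}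
    (h : f ≫ counitHom J ε X = f' ≫ counitHom J ε X) : f = f' :=
  have := hε X
  (cancel_mono _).1 h

variable (hε : IsVUniversal J ε)

/-- The inverse `B(JX, Y) ⟶ A(X, g)` of `counitHom`. -/
noncomputable def lift (X : A) : ((J.obj X ⟶[V] Y) : V) ⟶ (X ⟶[V] g) :=
  have := hε X
  inv (counitHom J ε X)

lemma lift_comp_counitHom (X : A) : hε.lift X ≫ counitHom J ε X = 𝟙 _ := by
  simp [lift]

/-- The map `B(Y, Y') ⟶ A(g, g')` between objects of morphisms that universality of
`ε' : Jg' ⟶ Y'` associates with any `ε : Jg ⟶ Y`; these maps make a choice of universal arrows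
functorial. -/
noncomputable def map {g g' : A} {Y Y' : B} (ε : EHom V (J.obj g) Y) {ε' : EHom V (J.obj g') Y'}
    (hε' : IsVUniversal J ε') : ((Y ⟶[V] Y') : V) ⟶ (g ⟶[V] g') :=
  precompV V ε Y' ≫ hε'.lift g

variable {g' : A} {Y' : B} {ε' : EHom V (J.obj g') Y'} (hε' : IsVUniversal J ε')

lemma map_comp_counitHom (ε : EHom V (J.obj g) Y) :
    hε'.map ε ≫ counitHom J ε' g = precompV V ε Y' := by
  rw [map, Category.assoc, lift_comp_counitHom, Category.comp_id]

lemma eId_comp_map : eId V Y ≫ hε.map ε = eId V g := hε.hom_ext <| by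
  rw [Category.assoc, map_comp_counitHom, eId_comp_precompV, eId_comp_counitHom]

lemma eComp_comp_map {g'' : A} {Y'' : B} {ε'' : EHom V (J.obj g'') Y''}
    (hε'' : IsVUniversal J ε'') (ε : EHom V (J.obj g) Y) :
    eComp V Y Y' Y'' ≫ hε''.map ε = (hε'.map ε ⊗ₘ hε''.map ε') ≫ eComp V g g' g'' :=
  hε''.hom_ext <| by
    calc (eComp V Y Y' Y'' ≫ hε''.map ε) ≫ counitHom J ε'' g
        = (precompV V ε Y' ▷ _) ≫ eComp V (J.obj g) Y' Y'' := by
          rw [Category.assoc, map_comp_counitHom, eComp_comp_precompV]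
      _ = ((hε'.map ε ≫ J.map g g') ▷ _) ≫ (postcompV V (J.obj g) ε' ▷ _) ≫
            eComp V (J.obj g) Y' Y'' := by
          rw [← hε'.map_comp_counitHom, counitHom, ← Category.assoc, comp_whiskerRight_assoc]
      _ = ((hε'.map ε ≫ J.map g g') ⊗ₘ (hε''.map ε' ≫ counitHom J ε'' g')) ≫
            eComp V (J.obj g) (J.obj g') Y'' := by
          rw [map_comp_counitHom, MonoidalCategory.tensorHom_def, Category.assoc,
            whiskerLeft_precompV_comp_eComp]
      _ = ((hε'.map ε ⊗ₘ hε''.map ε') ≫ eComp V g g' g'') ≫ counitHom J ε'' g := by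
          rw [Category.assoc, eComp_comp_counitHom, tensorHom_comp_tensorHom_assoc]

/-- The transpose `X ⟶ g` of the identity of `JX` along a universal arrow `Jg ⟶ JX`. -/
noncomputable def unit {X : A} {ε : EHom V (J.obj g) (J.obj X)} (hε : IsVUniversal J ε) :
    EHom V X g :=
  eId V (J.obj X) ≫ hε.lift X

variable {X : A} {ε : EHom V (J.obj g) (J.obj X)} (hε : IsVUniversal J ε)

lemma unit_comp_counitHom : hε.unit ≫ counitHom J ε X = eId V (J.obj X) := by
  rw [unit, Category.assoc, lift_comp_counitHom, Category.comp_id]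

lemma vcomp_unit_comp_map : vcomp V (hε.unit ≫ J.map X g) ε = eId V (J.obj X) := by
  rw [vcomp_eq_comp_postcompV, Category.assoc, ← counitHom, unit_comp_counitHom]

lemma map_comp_precompV_unit : hε'.map ε ≫ precompV V hε.unit g' = hε'.lift X :=
  hε'.hom_ext <| by
    rw [Category.assoc, precompV_comp_counitHom, reassoc_of% hε'.map_comp_counitHom,
      ← precompV_vcomp, vcomp_unit_comp_map, precompV_eId, lift_comp_counitHom]

lemma map_comp_lift {X' : A} {ε' : EHom V (J.obj g') (J.obj X')} (hε' : IsVUniversal J ε')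
    (X : A) : J.map X X' ≫ hε'.lift X = postcompV V X hε'.unit := hε'.hom_ext <| by
  rw [Category.assoc, lift_comp_counitHom, postcompV_comp_counitHom, unit_comp_counitHom,
    counitHom, postcompV_eId]

end IsVUniversal

variable {G : B → A} {ε : ∀ Y : B, EHom V (J.obj (G Y)) Y} (hε : ∀ Y, IsVUniversal J (ε Y))

/-- The right adjoint of `J` assembled from a choice of `V`-universal arrows. -/
noncomputable def rightAdjoint : EnrichedFunctor V B A where
  obj := G
  map Y Z := (hε Z).map (ε Y)
  map_id Y := (hε Y).eId_comp_map
  map_comp X Y Z := (hε Y).eComp_comp_map (hε Z) (ε X)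

/-- The adjunction of which the given `V`-universal arrows are the counit. -/
noncomputable def rightAdjointAdjunction : VAdjunction V J (rightAdjoint hε) where
  η :=
    { app X := (hε (J.obj X)).unit
      naturality X Y := (vNat_naturality_iff (F := EnrichedFunctor.id V A)
          (G := EnrichedFunctor.comp V J (rightAdjoint hε)) (fun X => (hε (J.obj X)).unit)
          X Y).2 <| by
        change 𝟙 _ ≫ postcompV V X (hε (J.obj Y)).unit =
          (J.map X Y ≫ (hε (J.obj Y)).map (ε (J.obj X))) ≫ precompV V (hε (J.obj X)).unit _
        rw [Category.id_comp, Category.assoc, IsVUniversal.map_comp_precompV_unit,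
          IsVUniversal.map_comp_lift] }
  ε :=
    { app := ε
      naturality Y Z := (vNat_naturality_iff (F := EnrichedFunctor.comp V (rightAdjoint hε) J)
          (G := EnrichedFunctor.id V B) ε Y Z).2 <| by
        change ((hε Z).map (ε Y) ≫ J.map (G Y) (G Z)) ≫ postcompV V (J.obj (G Y)) (ε Z) =
          𝟙 _ ≫ precompV V (ε Y) Z
        rw [Category.assoc, ← counitHom, IsVUniversal.map_comp_counitHom, Category.id_comp] }
  left_triangle X := (hε (J.obj X)).vcomp_unit_comp_map
  right_triangle Y := (hε Y).hom_ext <| by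
    change vcomp V (hε (J.obj (G Y))).unit (ε Y ≫ (hε Y).map (ε (J.obj (G Y)))) ≫
      counitHom J (ε Y) (G Y) = eId V (G Y) ≫ counitHom J (ε Y) (G Y)
    rw [vcomp_eq_comp_precompV, Category.assoc (ε Y), IsVUniversal.map_comp_precompV_unit,
      Category.assoc, IsVUniversal.lift_comp_counitHom, Category.comp_id, eId_comp_counitHom]

lemma exists_vAdjunction_iff_forall_exists_isVUniversal (J : EnrichedFunctor V A B) :
    (∃ G : EnrichedFunctor V B A, Nonempty (VAdjunction V J G)) ↔
      ∀ Y : B, ∃ (g : A) (ε : EHom V (J.obj g) Y), IsVUniversal J ε := by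
  constructor
  · rintro ⟨G, ⟨adj⟩⟩ Y
    exact ⟨G.obj Y, adj.counit Y, adj.isVUniversal_counit Y⟩
  · intro h
    choose G ε hε using h
    exact ⟨rightAdjoint hε, ⟨rightAdjointAdjunction hε⟩⟩

end Universal

section Equalizer

variable {D : Type u₁} [Category.{v} D]

/-- `ι` is an equalizer of `f` and `g`. The fork condition is part of the proposition, so that
equalizers can be transported before it has been checked for the new diagram. -/
def IsEqualizer {P X Y : D} (f g : X ⟶ Y) (ι : P ⟶ X) : Prop :=
  ∃ w : ι ≫ f = ι ≫ g, Nonempty (IsLimit (Fork.ofι ι w))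

namespace IsEqualizer

variable {P X Y P' X' Y' : D} {f g : X ⟶ Y} {ι : P ⟶ X} {f' g' : X' ⟶ Y'} {ι' : P' ⟶ X'}

lemma mono (h : IsEqualizer f g ι) : Mono ι := by
  obtain ⟨_, ⟨hι⟩⟩ := h
  exact Fork.IsLimit.mono hι

lemma exists_iso (h : IsEqualizer f g ι) {ι' : P' ⟶ X} (h' : IsEqualizer f g ι') :
    ∃ e : P ≅ P', e.hom ≫ ι' = ι := by
  obtain ⟨_, ⟨hι⟩⟩ := h
  obtain ⟨_, ⟨hι'⟩⟩ := h'
  exact ⟨hι.conePointUniqueUpToIso hι',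
    hι.conePointUniqueUpToIso_hom_comp hι' WalkingParallelPair.zero⟩

lemma of_isos (h : IsEqualizer f g ι) (e₀ : X ≅ X') (e₁ : Y ≅ Y') (e : P ≅ P')
    (hf : e₀.hom ≫ f' = f ≫ e₁.hom) (hg : e₀.hom ≫ g' = g ≫ e₁.hom)
    (hι : e.hom ≫ ι' = ι ≫ e₀.hom) : IsEqualizer f' g' ι' := by
  obtain ⟨w, ⟨hlim⟩⟩ := h
  have w' : ι' ≫ f' = ι' ≫ g' := by
    rw [← cancel_epi e.hom, reassoc_of% hι, reassoc_of% hι, hf, hg, reassoc_of% w]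
  exact ⟨w', ⟨Fork.isLimitOfIsos _ hlim _ e₀ e₁ e hf hg hι⟩⟩

end IsEqualizer

end Equalizer

lemma isVEqualizer_iff {C : Type u₁} [EnrichedCategory V C] {a b e : C} {q r : EHom V a b}
    {i : EHom V e a} : IsVEqualizer V q r e i ↔
      ∀ W : C, IsEqualizer (postcompV V W q) (postcompV V W r) (postcompV V W i) :=
  ⟨fun h W => ⟨h.w W, h.isLimit W⟩, fun h => ⟨fun W => (h W).1, fun W => (h W).2⟩⟩

section Triangle

variable {A : Type u₁} [EnrichedCategory V A] {B : Type u₂} [EnrichedCategory V B]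
  {C : Type u₃} [EnrichedCategory V C]
  {J : EnrichedFunctor V A B} {L : EnrichedFunctor V B C} {R : EnrichedFunctor V C A}
  {U : EnrichedFunctor V C B}

/-- The hypothesis of the enriched adjoint triangle theorem at an object `Y`: for every `X`,
`L : B(JX, Y) ⟶ C(LJX, LY)` is an equalizer in `V` of `f ↦ L(U(f) ∘ η)` and `f ↦ L(η) ∘ f`. -/
def IsEqualizedAt (J : EnrichedFunctor V A B) (adj2 : VAdjunction V L U) (Y : B) : Prop :=
  ∀ X : A, IsEqualizer (parallelSnd V J L U adj2 X Y) (parallelFst V J L U adj2 X Y)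
    (L.map (J.obj X) Y)

section

variable (adj2 : VAdjunction V L U)

lemma parallelFst_eq (X : A) (Y : B) :
    parallelFst V J L U adj2 X Y = postcompV V (L.obj (J.obj X)) (Lη V L U adj2 Y) :=
  rfl

lemma parallelSnd_eq (X : A) (Y : B) : parallelSnd V J L U adj2 X Y =
    (adj2.homIso (J.obj X) (L.obj Y)).hom ≫ L.map (J.obj X) (U.obj (L.obj Y)) :=
  (Category.assoc _ _ _).symm

lemma isEqualizedAt_of_vPrecomonadic (h : VPrecomonadic V L U adj2) (Y : B) :
    IsEqualizedAt J adj2 Y := fun X => by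
  have h' : IsEqualizer (postcompV V (J.obj X) (adj2.unit (U.obj (L.obj Y))))
      (postcompV V (J.obj X) (Lη V L U adj2 Y ≫ U.map (L.obj Y) (L.obj (U.obj (L.obj Y)))))
      (postcompV V (J.obj X) (adj2.unit Y)) :=
    isVEqualizer_iff.1 (h Y) (J.obj X)
  refine h'.of_isos (adj2.homIso (J.obj X) (L.obj Y)).symm
    (adj2.homIso (J.obj X) (L.obj (U.obj (L.obj Y)))).symm (Iso.refl _) ?_ ?_ ?_
  · rw [Iso.symm_hom, Iso.symm_hom, Iso.eq_comp_inv, Category.assoc, Iso.inv_comp_eq,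
      parallelSnd_eq, Category.assoc, adj2.map_comp_homIso_hom]
  · rw [Iso.symm_hom, Iso.symm_hom, Iso.eq_comp_inv, Category.assoc, Iso.inv_comp_eq,
      parallelFst_eq, adj2.postcompV_comp_homIso_hom]
  · rw [Iso.symm_hom, Iso.eq_comp_inv, Iso.refl_hom, Category.id_comp,
      adj2.map_comp_homIso_hom]

end

variable (adj1 : VAdjunction V (EnrichedFunctor.comp V J L) R) (adj2 : VAdjunction V L U)

/-- `homIso` for a composite left adjoint, typed without `EnrichedFunctor.comp`. -/
def compHomIso (X : A) (Z : C) : ((L.obj (J.obj X) ⟶[V] Z) : V) ≅ (X ⟶[V] R.obj Z) :=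
  adj1.homIso X Z

/-- `counit` for a composite left adjoint, typed without `EnrichedFunctor.comp`. -/
def compCounit (Z : C) : EHom V (L.obj (J.obj (R.obj Z))) Z :=
  adj1.counit Z

lemma compHomIso_inv (X : A) (Z : C) : (compHomIso adj1 X Z).inv =
    J.map X (R.obj Z) ≫ counitHom L (compCounit adj1 Z) (J.obj X) :=
  Category.assoc _ _ _

lemma postcompV_comp_compHomIso_hom (X : A) {Z Z' : C} (f : EHom V Z Z') :
    postcompV V (L.obj (J.obj X)) f ≫ (compHomIso adj1 X Z').hom =
      (compHomIso adj1 X Z).hom ≫ postcompV V X (f ≫ R.map Z Z') :=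
  adj1.postcompV_comp_homIso_hom X f

lemma map_comp_counitHom_comp_compHomIso_hom (X : A) {X' : A} {Z : C}
    (f : EHom V (L.obj (J.obj X')) Z) :
    J.map X X' ≫ counitHom L f (J.obj X) ≫ (compHomIso adj1 X Z).hom =
      postcompV V X (f ≫ (compHomIso adj1 X' Z).hom) := by
  have h : ((J.map X X' ≫ L.map (J.obj X) (J.obj X')) ≫ postcompV V _ f) ≫
      (compHomIso adj1 X Z).hom =
        postcompV V X (f ≫ (compHomIso adj1 X' Z).hom) :=
    adj1.counitHom_comp_homIso_hom X f
  simpa only [counitHom, Category.assoc] using h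

lemma vcomp_unit_comp_map_eq_compHomIso {X : A} {Z : C} (f : EHom V (L.obj (J.obj X)) Z) :
    vcomp V (b := R.obj (L.obj (J.obj X))) (adj1.unit X) (f ≫ R.map (L.obj (J.obj X)) Z) =
      f ≫ (compHomIso adj1 X Z).hom :=
  adj1.vcomp_unit_comp_map f

/-- The `V`-morphism `B(JX, Y) ⟶ A(X, RLY)`, `f ↦ R(Lf) ∘ ρ`, obtained by transposing `Lf`. -/
def comparison (X : A) (Y : B) : ((J.obj X ⟶[V] Y) : V) ⟶ (X ⟶[V] R.obj (L.obj Y)) :=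
  L.map (J.obj X) Y ≫ (compHomIso adj1 X (L.obj Y)).hom

lemma counitHom_comp_comparison (X : A) {g : A} {Y : B} (ε : EHom V (J.obj g) Y) :
    counitHom J ε X ≫ comparison adj1 X Y = postcompV V X (ε ≫ comparison adj1 g Y) := by
  rw [counitHom, comparison, Category.assoc, reassoc_of% postcompV_comp_map, comparison,
    ← Category.assoc ε, ← map_comp_counitHom_comp_compHomIso_hom, counitHom, Category.assoc]

lemma rY_eq (Y : B) : rY V J L R U adj1 adj2 Y =
    (compCounit adj1 (L.obj Y) ≫ (adj2.homIso (J.obj (R.obj (L.obj Y))) (L.obj Y)).hom) ≫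
      comparison adj1 (R.obj (L.obj Y)) (U.obj (L.obj Y)) := by
  rw [← adj2.vcomp_unit_comp_map, comparison, ← Category.assoc, ← vcomp_unit_comp_map_eq_compHomIso,
    Category.assoc]
  rfl

lemma compHomIso_hom_comp_postcompV_qY (X : A) (Y : B) :
    (compHomIso adj1 X (L.obj Y)).hom ≫ postcompV V X (qY V L R U adj2 Y) =
      parallelFst V J L U adj2 X Y ≫ (compHomIso adj1 X (L.obj (U.obj (L.obj Y)))).hom := by
  rw [parallelFst_eq, postcompV_comp_compHomIso_hom, qY]

lemma compHomIso_hom_comp_postcompV_rY (X : A) (Y : B) :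
    (compHomIso adj1 X (L.obj Y)).hom ≫ postcompV V X (rY V J L R U adj1 adj2 Y) =
      parallelSnd V J L U adj2 X Y ≫ (compHomIso adj1 X (L.obj (U.obj (L.obj Y)))).hom := by
  rw [← Iso.eq_inv_comp, rY_eq, ← counitHom_comp_comparison, compHomIso_inv, parallelSnd_eq,
    counitHom, ← adj2.counitHom_comp_homIso_hom, comparison]
  simp only [Category.assoc]

variable {adj2}

lemma IsEqualizedAt.isEqualizer_comparison {Y : B} (h : IsEqualizedAt J adj2 Y) (X : A) :
    IsEqualizer (postcompV V X (rY V J L R U adj1 adj2 Y)) (postcompV V X (qY V L R U adj2 Y))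
      (comparison adj1 X Y) :=
  (h X).of_isos (compHomIso adj1 X _) (compHomIso adj1 X _) (Iso.refl _)
    (compHomIso_hom_comp_postcompV_rY adj1 adj2 X Y)
    (compHomIso_hom_comp_postcompV_qY adj1 adj2 X Y) (Category.id_comp _)

lemma exists_isVEqualizer_iff_exists_isVUniversal {Y : B} (h : IsEqualizedAt J adj2 Y) (g : A) :
    (∃ i, IsVEqualizer V (rY V J L R U adj1 adj2 Y) (qY V L R U adj2 Y) g i) ↔
      ∃ ε : EHom V (J.obj g) Y, IsVUniversal J ε := by
  constructor
  · rintro ⟨i, hi⟩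
    choose θ hθ using fun X =>
      (isVEqualizer_iff.1 hi X).exists_iso (h.isEqualizer_comparison adj1 X)
    have counitHom_eq (X : A) : counitHom J (eId V g ≫ (θ g).hom) X = (θ X).hom := by
      have := (h.isEqualizer_comparison adj1 X).mono
      rw [← cancel_mono (comparison adj1 X Y), counitHom_comp_comparison, Category.assoc, hθ, hθ,
        eId_comp_postcompV]
    exact ⟨eId V g ≫ (θ g).hom, fun X => counitHom_eq X ▸ (θ X).isIso_hom⟩
  · rintro ⟨ε, hε⟩
    refine ⟨ε ≫ comparison adj1 g Y, isVEqualizer_iff.2 fun X => ?_⟩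
    have := hε X
    refine (h.isEqualizer_comparison adj1 X).of_isos (Iso.refl _) (Iso.refl _)
      (asIso (counitHom J ε X)).symm (by simp) (by simp) ?_
    simp [← counitHom_comp_comparison]

end Triangle

theorem enriched_dubuc_theorem_general
    (V : Type u) [Category.{v} V] [MonoidalCategory V]
    {A : Type u₁} [EnrichedCategory V A] {B : Type u₂} [EnrichedCategory V B]
    {C : Type u₃} [EnrichedCategory V C]
    (J : EnrichedFunctor V A B) (L : EnrichedFunctor V B C) (R : EnrichedFunctor V C A)
    (U : EnrichedFunctor V C B)
    (adj1 : VAdjunction V (EnrichedFunctor.comp V J L) R) (adj2 : VAdjunction V L U)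
    (h : ∀ Y : B, IsEqualizedAt J adj2 Y) :
    ((∃ G : EnrichedFunctor V B A, Nonempty (VAdjunction V J G)) ↔
      ∀ Y : B, HasVEqualizer V (rY V J L R U adj1 adj2 Y) (qY V L R U adj2 Y)) ∧
    (∀ (G : EnrichedFunctor V B A), VAdjunction V J G → ∀ Y : B,
      ∃ i, IsVEqualizer V (rY V J L R U adj1 adj2 Y) (qY V L R U adj2 Y) (G.obj Y) i) := by
  have hiff (Y : B) := exists_isVEqualizer_iff_exists_isVUniversal adj1 (h Y)
  refine ⟨?_, fun G adj Y => (hiff Y (G.obj Y)).2 ⟨adj.counit Y, adj.isVUniversal_counit Y⟩⟩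
  rw [exists_vAdjunction_iff_forall_exists_isVUniversal]
  exact forall_congr' fun Y => exists_congr fun g => (hiff Y g).symm

/-- **Enriched Dubuc Theorem** (Corollary 1.2 of "On Biadjoint Triangles").

Let `(L ⊣ U, η, ε)` and `(E ⊣ R, ρ, μ)` (with `E = L ∘ J`) be `V`-adjunctions and assume
`L` is `V`-precomonadic.  Then `J` has a right `V`-adjoint iff for every `Y` the
`V`-equalizer of `RL(U(μ_{LY})η_{JRLY})ρ_{RLY}, RL(η_Y) : RLY ⇉ RLULY` exists in `𝔄`;
in that case these `V`-equalizers give the values of the right `V`-adjoint. -/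
theorem enriched_dubuc_theorem
    (V : Type u) [Category.{v} V] [MonoidalCategory V] [SymmetricCategory V]
    [MonoidalClosed V] [HasLimits V] [HasColimits V]
    {A : Type u₁} [EnrichedCategory V A] {B : Type u₂} [EnrichedCategory V B]
    {C : Type u₃} [EnrichedCategory V C]
    (J : EnrichedFunctor V A B) (L : EnrichedFunctor V B C) (R : EnrichedFunctor V C A)
    (U : EnrichedFunctor V C B)
    (adj1 : VAdjunction V (EnrichedFunctor.comp V J L) R) (adj2 : VAdjunction V L U)
    (hpre : VPrecomonadic V L U adj2) :
    ((∃ G : EnrichedFunctor V B A, Nonempty (VAdjunction V J G)) ↔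
      ∀ Y : B, HasVEqualizer V (rY V J L R U adj1 adj2 Y) (qY V L R U adj2 Y)) ∧
    (∀ (G : EnrichedFunctor V B A), VAdjunction V J G → ∀ Y : B,
      ∃ i, IsVEqualizer V (rY V J L R U adj1 adj2 Y) (qY V L R U adj2 Y) (G.obj Y) i) :=
  enriched_dubuc_theorem_general V J L R U adj1 adj2
    (isEqualizedAt_of_vPrecomonadic adj2 hpre)

end EnrichedAdjointTriangles
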